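/- Ancestor characterization of last tokens: let s be a nonempty string and x a canonical token. Then x ∈ P(θ(s)) if and only if there exists a stage k with 0 ≤ k ≤ m such that x is the last element of the list φ_k(s). -/

import Mathlib

/-!
Common BPE formalization preamble.

A token is a (nonempty) string over the alphabet `α`, modeled as `List α`.
A merge rule is a pair of tokens; a dictionary is an ordered list of rules
(earlier rules have strictly higher priority).
-/

namespace BPE

variable {α : Type*} [DecidableEq α]

/-- A token is a string over the alphabet (nonemptiness is imposed by hypotheses). -/
abbrev Token (α : Type*) := List α

/-- A merge rule is an ordered pair of tokens. -/
abbrev Rule (α : Type*) := Token α × Token α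

/-- A dictionary is an ordered list of merge rules; earlier = higher priority. -/
abbrev Dict (α : Type*) := List (Rule α)

/-- Apply a single merge rule to a token list, scanning left to right and replacing
each adjacent occurrence of `r.1` followed by `r.2` by the concatenated token,
resuming the scan after the newly formed token (no overlaps). -/
def applyRule (r : Rule α) : List (Token α) → List (Token α)
  | [] => []
  | [t] => [t]
  | t :: u :: rest =>
      if t = r.1 ∧ u = r.2 then (r.1 ++ r.2) :: applyRule r rest
      else t :: applyRule r (u :: rest)

/-- `φ₀(s)`: the list of single-character tokens of `s`. -/
def phi0 (s : List α) : List (Token α) := s.map (fun c => [c])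

/-- `φ_k(s)`: the token list after applying the first `k` rules of `D` to `s`. -/
def phiK (D : Dict α) (k : ℕ) (s : List α) : List (Token α) :=
  (D.take k).foldl (fun φ r => applyRule r φ) (phi0 s)

/-- The BPE tokenization `𝕋_D(s)`. -/
def tokenize (D : Dict α) (s : List α) : List (Token α) :=
  phiK D D.length s

/-- Detokenization `π`: concatenation of the tokens. -/
def detok (φ : List (Token α)) : List α := φ.flatten

/-- A dictionary is valid if all rule components are genuine (nonempty) tokens. -/
def ValidDict (D : Dict α) : Prop := ∀ r ∈ D, r.1 ≠ [] ∧ r.2 ≠ []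

/-- A token `t` is canonical if `𝕋_D(t) = [t]`. -/
def IsCanonical (D : Dict α) (t : Token α) : Prop := tokenize D t = [t]

/-- The last token `θ(s)`: last element of `𝕋_D(s)` (defaulting to `[]`). -/
def theta (D : Dict α) (s : List α) : Token α := (tokenize D s).getLastD []

/-- `j` (0-based) is the index of the canonical rule of `t`:
`φ_j(t)` has exactly two tokens and `φ_{j+1}(t) = [t]`. -/
def IsCanonicalRuleIdx (D : Dict α) (t : Token α) (j : ℕ) : Prop :=
  j < D.length ∧ (phiK D j t).length = 2 ∧ phiK D (j + 1) t = [t]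

open Classical in
/-- The (0-based) index of the canonical rule of `t` (junk value `0` if none exists). -/
noncomputable def canonIdx (D : Dict α) (t : Token α) : ℕ :=
  if h : ∃ j, IsCanonicalRuleIdx D t j then h.choose else 0

/-- Predecessor `pre(t)`: first token of the two-token stage `φ_{j-1}(t)`. -/
noncomputable def pre (D : Dict α) (t : Token α) : Token α :=
  (phiK D (canonIdx D t) t).headD []

/-- Successor `suc(t)`: second token of the two-token stage `φ_{j-1}(t)`. -/
noncomputable def suc (D : Dict α) (t : Token α) : Token α :=
  (phiK D (canonIdx D t) t).getLastD []

/-- `InPath D x a` means `a ∈ P(x)`: `a` is obtained from `x` by iterating `suc`,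
i.e. `a` lies on the ancestor path of `x` in the Successor Forest. -/
def InPath (D : Dict α) (x a : Token α) : Prop :=
  ∃ n : ℕ, (suc D)^[n] x = a

/-- `s` with the suffix `u` removed. -/
def dropSuffix (s u : List α) : List α := s.take (s.length - u.length)

/-- The Prefix Last-Token Condition of the canonical suffix token `t`
with respect to the string `s`. Atomic tokens satisfy it by definition;
a non-atomic token must satisfy Reachability and Priority dominance. -/
def PLTC (D : Dict α) (s t : Token α) : Prop :=
  t.length = 1 ∨
    (1 < t.length ∧
      InPath D (theta D (dropSuffix s (suc D t))) (pre D t) ∧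
      (theta D (dropSuffix s (suc D t)) ≠ pre D t →
        ∀ u : Token α, 1 < u.length → IsCanonical D u → suc D u = pre D t →
          InPath D (theta D (dropSuffix s (suc D t))) u →
          canonIdx D t < canonIdx D u))


lemma applyRule_split (r : Rule α) : ∀ (L a' b' : List (Token α)),
    applyRule r L = a' ++ b' → ∃ a b, L = a ++ b ∧ applyRule r a = a' ∧ applyRule r b = b' := by
  intro L
  induction L using applyRule.induct r with
  | case1 =>
    intro a' b' h
    simp only [applyRule] at h
    obtain ⟨rfl, rfl⟩ := List.append_eq_nil_iff.1 h.symm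
    exact ⟨[], [], rfl, rfl, rfl⟩
  | case2 t =>
    intro a' b' h
    cases a' with
    | nil => exact ⟨[], [t], rfl, rfl, h⟩
    | cons c a' =>
      simp only [applyRule, List.cons_append, List.cons.injEq] at h
      obtain ⟨rfl, h⟩ := h
      obtain ⟨rfl, rfl⟩ := List.append_eq_nil_iff.1 h.symm
      exact ⟨[t], [], rfl, rfl, rfl⟩
  | case3 t u rest hc ih =>
    intro a' b' h
    cases a' with
    | nil => exact ⟨[], _, rfl, rfl, h⟩
    | cons c a' =>
      rw [applyRule, if_pos hc] at h
      simp only [List.cons_append, List.cons.injEq] at h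
      obtain ⟨rfl, h⟩ := h
      obtain ⟨a, b, rfl, h1, h2⟩ := ih _ _ h
      refine ⟨t :: u :: a, b, rfl, ?_, h2⟩
      rw [applyRule, if_pos hc, h1]
  | case4 t u rest hc ih =>
    intro a' b' h
    cases a' with
    | nil => exact ⟨[], _, rfl, rfl, h⟩
    | cons c a' =>
      rw [applyRule, if_neg hc] at h
      simp only [List.cons_append, List.cons.injEq] at h
      obtain ⟨rfl, h⟩ := h
      obtain ⟨a, b, hab, h1, h2⟩ := ih _ _ h
      refine ⟨t :: a, b, by rw [hab]; rfl, ?_, h2⟩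
      cases a with
      | nil => simpa [applyRule] using h1
      | cons v a =>
        simp only [List.cons_append, List.cons.injEq] at hab
        obtain ⟨rfl, _⟩ := hab
        rw [applyRule, if_neg hc, h1]

lemma applyRule_flatten (r : Rule α) (L : List (Token α)) :
    (applyRule r L).flatten = L.flatten := by
  induction L using applyRule.induct r with
  | case1 => rfl
  | case2 t => rfl
  | case3 t u rest hc ih =>
    rw [applyRule, if_pos hc]
    simp [ih, hc.1, hc.2]
  | case4 t u rest hc ih =>
    rw [applyRule, if_neg hc]
    simp [ih]

lemma applyRule_nonempty (r : Rule α) (L : List (Token α)) (h : ∀ t ∈ L, t ≠ []) :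
    ∀ t ∈ applyRule r L, t ≠ [] := by
  induction L using applyRule.induct r with
  | case1 => exact h
  | case2 t => exact h
  | case3 t u rest hc ih =>
    rw [applyRule, if_pos hc]
    simp only [List.mem_cons, forall_eq_or_imp] at h ⊢
    refine ⟨?_, ih h.2.2⟩
    rw [← hc.1]
    simp [h.1]
  | case4 t u rest hc ih =>
    rw [applyRule, if_neg hc]
    simp only [List.mem_cons, forall_eq_or_imp] at h ih ⊢
    exact ⟨h.1, ih h.2⟩

lemma applyRule_eq_nil (r : Rule α) (L : List (Token α)) (h : applyRule r L = []) : L = [] := by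
  induction L using applyRule.induct r with
  | case1 => rfl
  | case2 t => exact h
  | case3 t u rest hc ih => rw [applyRule, if_pos hc] at h; simp at h
  | case4 t u rest hc ih => rw [applyRule, if_neg hc] at h; simp at h

lemma applyRule_single (r : Rule α) (L : List (Token α)) (t : Token α)
    (h : applyRule r L = [t]) : L = [t] ∨ L.length = 2 := by
  rcases L with _ | ⟨a, _ | ⟨b, L⟩⟩
  · simp [applyRule] at h
  · exact Or.inl h
  · right
    rw [applyRule] at h
    split_ifs at h with hc
    · simp only [List.cons.injEq] at h
      rw [applyRule_eq_nil r L h.2]; rfl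
    · simp only [List.cons.injEq] at h
      have := applyRule_eq_nil r _ h.2
      simp at this

lemma phiK_succ (D : Dict α) (k : ℕ) (hk : k < D.length) (s : List α) :
    phiK D (k + 1) s = applyRule D[k] (phiK D k s) := by
  unfold phiK
  rw [List.take_succ_eq_append_getElem hk, List.foldl_append]
  rfl

lemma phiK_zero (D : Dict α) (s : List α) : phiK D 0 s = phi0 s := by
  simp [phiK]

lemma phiK_flatten (D : Dict α) (k : ℕ) (hk : k ≤ D.length) (s : List α) :
    (phiK D k s).flatten = s := by
  induction k with
  | zero =>
    rw [phiK_zero, phi0]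
    induction s with
    | nil => rfl
    | cons c s ih => simpa using ih
  | succ k ih => rw [phiK_succ D k (by omega), applyRule_flatten, ih (by omega)]

lemma phiK_nonempty (D : Dict α) (k : ℕ) (hk : k ≤ D.length) (s : List α) :
    ∀ t ∈ phiK D k s, t ≠ [] := by
  induction k with
  | zero => rw [phiK_zero, phi0]; simp
  | succ k ih => rw [phiK_succ D k (by omega)]; exact applyRule_nonempty _ _ (ih (by omega))

lemma phiK_ne_nil (D : Dict α) (k : ℕ) (hk : k ≤ D.length) (s : List α) (hs : s ≠ []) :
    phiK D k s ≠ [] := by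
  intro h
  have := phiK_flatten D k hk s
  rw [h] at this
  exact hs this.symm

lemma phiK_split_aux (D : Dict α) (s : List α) (k : ℕ) (hk : k ≤ D.length) :
    ∀ a b : List (Token α), phiK D k s = a ++ b →
    ∃ u v, phiK D k u = a ∧ phiK D k v = b ∧
      ∀ i ≤ k, phiK D i s = phiK D i u ++ phiK D i v := by
  induction k with
  | zero =>
    intro a b h
    rw [phiK_zero, phi0, List.map_eq_append_iff] at h
    obtain ⟨u, v, rfl, h1, h2⟩ := h
    refine ⟨u, v, by rw [phiK_zero]; exact h1, by rw [phiK_zero]; exact h2, ?_⟩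
    intro i hi
    obtain rfl : i = 0 := by omega
    simp [phiK_zero, phi0]
  | succ k ih =>
    intro a b h
    have hk' : k < D.length := by omega
    have h0 := h
    rw [phiK_succ D k hk'] at h
    obtain ⟨a', b', h1, h2, h3⟩ := applyRule_split _ _ _ _ h
    obtain ⟨u, v, h4, h5, h6⟩ := ih (by omega) a' b' h1
    have h7 : phiK D (k + 1) u = a := by rw [phiK_succ D k hk', h4, h2]
    have h8 : phiK D (k + 1) v = b := by rw [phiK_succ D k hk', h5, h3]
    refine ⟨u, v, h7, h8, ?_⟩
    intro i hi
    rcases Nat.lt_or_ge k i with hlt | hge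
    · obtain rfl : i = k + 1 := by omega
      rw [h0, h7, h8]
    · exact h6 i hge

/-- If the last token at stage `k` is `y`, then up to stage `k` the last tokens of `s` and of `y`
agree, and `y` is a single token at stage `k`. -/
lemma phiK_last (D : Dict α) (s : List α) (k : ℕ) (hk : k ≤ D.length)
    (a : List (Token α)) (y : Token α) (h : phiK D k s = a ++ [y]) :
    phiK D k y = [y] ∧ ∀ i ≤ k, (phiK D i s).getLast? = (phiK D i y).getLast? := by
  obtain ⟨u, v, -, h2, h3⟩ := phiK_split_aux D s k hk _ _ h
  have hv : v = y := by
    have := phiK_flatten D k hk v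
    rw [h2] at this
    simpa using this.symm
  subst hv
  refine ⟨h2, fun i hi => ?_⟩
  have hne : v ≠ [] := phiK_nonempty D k hk v v (by rw [h2]; simp)
  rw [h3 i hi, List.getLast?_append_of_ne_nil _ (phiK_ne_nil D i (by omega) v hne)]

lemma phiK_stay (D : Dict α) (t : Token α) (k i : ℕ) (hki : k ≤ i) (hi : i ≤ D.length)
    (h : phiK D k t = [t]) : phiK D i t = [t] := by
  induction i, hki using Nat.le_induction with
  | base => exact h
  | succ i _ ih => rw [phiK_succ D i (by omega), ih (by omega)]; rfl

lemma exists_canonIdx (D : Dict α) (t : Token α) (ht : 1 < t.length) (hc : IsCanonical D t) :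
    ∃ j, IsCanonicalRuleIdx D t j := by
  classical
  have hex : ∃ k, phiK D k t = [t] := ⟨D.length, hc⟩
  have hle : Nat.find hex ≤ D.length := Nat.find_min' hex hc
  have hspec := Nat.find_spec hex
  have hmin := fun m => Nat.find_min hex (m := m)
  generalize Nat.find hex = k at hle hspec hmin
  cases k with
  | zero =>
    rw [phiK_zero, phi0] at hspec
    have := congrArg List.length hspec
    simp at this
    omega
  | succ j =>
    refine ⟨j, by omega, ?_, hspec⟩
    rw [phiK_succ D j (by omega)] at hspec
    exact (applyRule_single _ _ _ hspec).resolve_left (hmin j (by omega))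

lemma inPath_iff (D : Dict α) (t x : Token α) :
    InPath D t x ↔ t = x ∨ InPath D (suc D t) x := by
  constructor
  · rintro ⟨n, hn⟩
    cases n with
    | zero => exact Or.inl hn
    | succ n => exact Or.inr ⟨n, by simpa using hn⟩
  · rintro (h | ⟨n, hn⟩)
    · exact ⟨0, h⟩
    · exact ⟨n + 1, by simpa using hn⟩

lemma canonical_path (D : Dict α) (x : Token α) (n : ℕ) : ∀ t : Token α, t.length = n → t ≠ [] →
    IsCanonical D t →
    (InPath D t x ↔ ∃ k ≤ D.length, (phiK D k t).getLast? = some x) := by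
  induction n using Nat.strong_induction_on with
  | _ n ih =>
  intro t hn hne hc
  by_cases h1 : 1 < t.length
  · have hex := exists_canonIdx D t h1 hc
    have hj : IsCanonicalRuleIdx D t (canonIdx D t) := by
      unfold canonIdx
      rw [dif_pos hex]
      exact hex.choose_spec
    have hsuc : suc D t = (phiK D (canonIdx D t) t).getLastD [] := rfl
    generalize canonIdx D t = j at hj hsuc
    obtain ⟨hjl, h2, hj1⟩ := hj
    obtain ⟨p, y, hpy⟩ := List.length_eq_two.1 h2
    have hy : suc D t = y := by rw [hsuc, hpy]; rfl
    obtain ⟨hyy, hlast⟩ := phiK_last D t j (by omega) [p] y hpy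
    have hp : p ≠ [] := phiK_nonempty D j (by omega) t p (by rw [hpy]; simp)
    have hyn : y ≠ [] := phiK_nonempty D j (by omega) t y (by rw [hpy]; simp)
    have hfl := phiK_flatten D j (by omega) t
    rw [hpy] at hfl
    have hlen : y.length < n := by
      have := List.length_pos_iff.2 hp
      rw [← hn, ← hfl]
      simp
      omega
    have hyc : IsCanonical D y := phiK_stay D y j _ (by omega) le_rfl hyy
    rw [inPath_iff, hy, ih _ hlen y rfl hyn hyc]
    constructor
    · rintro (rfl | ⟨k, hk, hl⟩)
      · exact ⟨j + 1, by omega, by rw [hj1]; rfl⟩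
      · rcases Nat.lt_or_ge j k with hlt | hge
        · refine ⟨j, by omega, ?_⟩
          rw [phiK_stay D y j k (by omega) hk hyy] at hl
          rw [hlast j le_rfl, hyy, hl]
        · exact ⟨k, hk, by rw [hlast k hge, hl]⟩
    · rintro ⟨k, hk, hl⟩
      rcases Nat.lt_or_ge j k with hlt | hge
      · left
        rw [phiK_stay D t (j + 1) k hlt hk hj1] at hl
        simpa using hl
      · right
        exact ⟨k, hk, by rw [← hlast k hge, hl]⟩
  · have hpos := List.length_pos_iff.2 hne
    obtain ⟨c, rfl⟩ := List.length_eq_one_iff.1 (show t.length = 1 by omega)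
    have h0 : phiK D 0 [c] = [[c]] := by rw [phiK_zero]; rfl
    have hall : ∀ k ≤ D.length, phiK D k [c] = [[c]] := fun k hk =>
      phiK_stay D [c] 0 k (by omega) hk h0
    have hnex : ¬ ∃ j, IsCanonicalRuleIdx D [c] j := by
      rintro ⟨j, hj, h2, -⟩
      rw [hall j hj.le] at h2
      simp at h2
    have hs : suc D [c] = [c] := by
      unfold suc canonIdx
      rw [dif_neg hnex, h0]
      rfl
    constructor
    · rintro ⟨m, hm⟩
      rw [Function.iterate_fixed hs] at hm
      exact ⟨0, by omega, by rw [h0, ← hm]; rfl⟩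
    · rintro ⟨k, hk, hl⟩
      rw [hall k hk] at hl
      exact ⟨0, by simpa using hl⟩

/-- **Ancestor characterization of last tokens.** For a nonempty string `s` and a
canonical token `x`: `x ∈ P(θ(s))` iff `x` is the last element of `φ_k(s)` at some
stage `0 ≤ k ≤ m`. -/
theorem ancestor_characterization [Fintype α] (D : Dict α) (hD : ValidDict D)
    (s : List α) (hs : s ≠ []) (x : Token α) (hx : IsCanonical D x) :
    InPath D (theta D s) x ↔ ∃ k ≤ D.length, (phiK D k s).getLast? = some x := by
  have hne := phiK_ne_nil D D.length le_rfl s hs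
  obtain ⟨a, y, hay⟩ : ∃ a y, phiK D D.length s = a ++ [y] :=
    ⟨_, _, (List.dropLast_append_getLast hne).symm⟩
  have hth : theta D s = y := by
    unfold theta tokenize
    rw [hay]
    simp
  obtain ⟨hyc, hlast⟩ := phiK_last D s D.length le_rfl a y hay
  have hyn : y ≠ [] := phiK_nonempty D D.length le_rfl s y (by rw [hay]; simp)
  rw [hth, canonical_path D x _ y rfl hyn hyc]
  constructor
  · rintro ⟨k, hk, hl⟩
    exact ⟨k, hk, by rw [hlast k hk, hl]⟩
  · rintro ⟨k, hk, hl⟩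
    exact ⟨k, hk, by rw [← hlast k hk, hl]⟩

end BPE
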